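/- arXiv:2211.14374 — 2 statements merged into one kernel-verified Lean document; each statement's English description precedes it below -/
import Mathlib

section
/- Let M and N be weight sequences and assume that N is log-convex. If there exist c > 0 and d > 0 such that H^∞_{v_{M,c}}(ℂ) ⊆ H^∞_{v_{N,d}}(ℂ) as sets, then N ≼ M, i.e. sup_{j≥1} (N_j/M_j)^{1/j} < ∞. -/
open Filter Set

/-- The associated weight function `ω_M(t) = sup_j log(t^j / M_j)` for `t ≠ 0`, `ω_M(0) = 0`. -/
noncomputable def omegaM (M : ℕ → ℝ) (t : ℝ) : ℝ :=
  if t = 0 then 0 else ⨆ j : ℕ, Real.log (t ^ j / M j)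

/-- `v_M(t) = exp(-ω_M(t))`. -/
noncomputable def vM (M : ℕ → ℝ) (t : ℝ) : ℝ :=
  Real.exp (-(omegaM M t))

/-- `v_{M,c}(t) = exp(-ω_M(c·t))`. -/
noncomputable def vMc (M : ℕ → ℝ) (c t : ℝ) : ℝ :=
  Real.exp (-(omegaM M (c * t)))

/-- `v_M^c(t) = exp(-c·ω_M(t))`. -/
noncomputable def vMpow (M : ℕ → ℝ) (c t : ℝ) : ℝ :=
  Real.exp (-(c * omegaM M t))

/-- A weight sequence: positive, `M_0 = 1`, `(M_j)^{1/j} → ∞`. -/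
def WeightSeq (M : ℕ → ℝ) : Prop :=
  (∀ j, 0 < M j) ∧ M 0 = 1 ∧
    Tendsto (fun j : ℕ => (M j) ^ (1 / (j : ℝ))) atTop atTop

/-- Log-convexity: `M_j² ≤ M_{j-1}·M_{j+1}` for `j ≥ 1`. -/
def LogConvexSeq (M : ℕ → ℝ) : Prop :=
  ∀ j : ℕ, 1 ≤ j → (M j) ^ 2 ≤ M (j - 1) * M (j + 1)

/-- The class `LC`: normalized log-convex weight sequences. -/
def LCset (M : ℕ → ℝ) : Prop :=
  WeightSeq M ∧ LogConvexSeq M ∧ 1 ≤ M 1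

/-- Weighted space of entire functions with `sup |f(z)|·v(|z|) < ∞`. -/
def Hinf (v : ℝ → ℝ) : Set (ℂ → ℂ) :=
  {f | Differentiable ℂ f ∧
    ∃ C : ℝ, ∀ z : ℂ, ‖f z‖ * v ‖z‖ ≤ C}

/-- The weighted sup-norm `‖f‖_v`. -/
noncomputable def wnorm (v : ℝ → ℝ) (f : ℂ → ℂ) : ℝ :=
  ⨆ z : ℂ, ‖f z‖ * v ‖z‖

/-- A weight: strictly positive, continuous, non-increasing and rapidly
decreasing on `[0,∞)`. -/
def IsWeight (v : ℝ → ℝ) : Prop :=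
  (∀ t : ℝ, 0 ≤ t → 0 < v t) ∧ ContinuousOn v (Set.Ici 0) ∧
    AntitoneOn v (Set.Ici 0) ∧
    ∀ k : ℕ, Tendsto (fun t : ℝ => t ^ k * v t) atTop (nhds 0)

/-- A normalized weight: `v ≡ 1` on `[0,1]`. -/
def NormalizedWeight (v : ℝ → ℝ) : Prop :=
  ∀ t : ℝ, 0 ≤ t → t ≤ 1 → v t = 1

/-- A (log-)convex weight: `t ↦ -log v(eᵗ)` is convex on `ℝ`. -/
def ConvexWeight (v : ℝ → ℝ) : Prop :=
  ConvexOn ℝ Set.univ fun t : ℝ => -Real.log (v (Real.exp t))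

/-- Moderate growth for a weight: `v(H·t) ≤ e^H · v(t)²`. -/
def ModerateGrowthW (v : ℝ → ℝ) : Prop :=
  ∃ H : ℝ, 1 ≤ H ∧ ∀ t : ℝ, 0 ≤ t → v (H * t) ≤ Real.exp H * (v t) ^ 2

/-- Moderate growth (mg) for a sequence: `M_{j+k} ≤ C^{j+k}·M_j·M_k`. -/
def MGseq (M : ℕ → ℝ) : Prop :=
  ∃ C : ℝ, 1 ≤ C ∧ ∀ j k : ℕ, M (j + k) ≤ C ^ (j + k) * M j * M k

/-- The associated weight sequence `M^v_j = sup_{t>0} t^j·v(t)`. -/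
noncomputable def assocSeq (v : ℝ → ℝ) (j : ℕ) : ℝ :=
  ⨆ t : Set.Ioi (0 : ℝ), (t : ℝ) ^ j * v t

/-- The unit ball `B_{1/v}(ℂ)` of entire functions bounded by `1/v`. -/
def BClass (v : ℝ → ℝ) : Set (ℂ → ℂ) :=
  {f | Differentiable ℂ f ∧ ∀ z : ℂ, ‖f z‖ ≤ 1 / v ‖z‖}

/-- The associated growth condition `w̃_v(z) = sup{|f(z)| : f ∈ B_{1/v}}`. -/
noncomputable def wTilde (v : ℝ → ℝ) (z : ℂ) : ℝ :=
  sSup {x : ℝ | ∃ f ∈ BClass v, x = ‖f z‖}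

/-- The associated weight `ṽ = 1/w̃_v`, as a function of `t = |z|`. -/
noncomputable def vTilde (v : ℝ → ℝ) (t : ℝ) : ℝ :=
  1 / wTilde v (t : ℂ)

/-- An essential weight: `v ∼ ṽ`. -/
def Essential (v : ℝ → ℝ) : Prop :=
  ∃ C : ℝ, 1 ≤ C ∧ ∀ t : ℝ, 0 ≤ t →
    v t ≤ C * vTilde v t ∧ vTilde v t ≤ C * v t

/-- `P_v(t) = sup_j t^j/‖z^j‖_v`. -/
noncomputable def Pfun (v : ℝ → ℝ) (t : ℝ) : ℝ :=
  ⨆ j : ℕ, t ^ j / wnorm v fun z : ℂ => z ^ j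

/-- The convolved sequence `(M⋆N)_j = min_{0≤k≤j} M_k·N_{j-k}`. -/
noncomputable def convSeq (M N : ℕ → ℝ) (j : ℕ) : ℝ :=
  (Finset.range (j + 1)).inf' Finset.nonempty_range_add_one fun k => M k * N (j - k)

/-! The entire function `E(z) = ∑ z ^ j / M_j`, rescaled by `c / 2`, lies in `H^∞_{v_{M,c}}`: the
factor `1 / 2` buys a convergent geometric series. By hypothesis it then also lies in
`H^∞_{v_{N,d}}`. On the positive axis `E` dominates each of its terms, so
`(c t / 2) ^ j / M_j ≤ C exp(ω_N(d t))` for all `t > 0`. Since `N` is log-convex, the supremum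
defining `ω_N` at `s = N_{j+1} / N_j` is attained at the index `j`, and taking `t = s / d` makes the
powers of `s` cancel, leaving `N_j / M_j ≤ C (2 d / c) ^ j`. -/

section LogConvex

variable {N : ℕ → ℝ}

theorem LogConvexSeq.monotone_succ_div (hlc : LogConvexSeq N) (hN : ∀ j, 0 < N j) :
    Monotone fun j => N (j + 1) / N j := by
  refine monotone_nat_of_le_succ fun j => (div_le_div_iff₀ (hN _) (hN _)).2 ?_
  calc N (j + 1) * N (j + 1) = N (j + 1) ^ 2 := (sq _).symm
    _ ≤ N j * N (j + 2) := hlc (j + 1) j.succ_pos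
    _ = N (j + 2) * N j := mul_comm _ _

theorem pow_div_le_pow_succ_div_iff (hN : ∀ j, 0 < N j) {t : ℝ} (ht : 0 < t) (k : ℕ) :
    t ^ k / N k ≤ t ^ (k + 1) / N (k + 1) ↔ N (k + 1) / N k ≤ t := by
  rw [div_le_div_iff₀ (hN _) (hN _), div_le_iff₀ (hN _), pow_succ, mul_assoc,
    mul_le_mul_iff_right₀ (pow_pos ht k)]

theorem pow_succ_div_le_pow_div_iff (hN : ∀ j, 0 < N j) {t : ℝ} (ht : 0 < t) (k : ℕ) :
    t ^ (k + 1) / N (k + 1) ≤ t ^ k / N k ↔ t ≤ N (k + 1) / N k := by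
  rw [div_le_div_iff₀ (hN _) (hN _), le_div_iff₀ (hN _), pow_succ, mul_assoc,
    mul_le_mul_iff_right₀ (pow_pos ht k)]

theorem LogConvexSeq.pow_succ_div_div_le (hlc : LogConvexSeq N) (hN : ∀ j, 0 < N j) (j k : ℕ) :
    (N (j + 1) / N j) ^ k / N k ≤ (N (j + 1) / N j) ^ j / N j := by
  have hmono := hlc.monotone_succ_div hN
  have hs : 0 < N (j + 1) / N j := div_pos (hN _) (hN _)
  rcases le_total k j with hkj | hjk
  · induction hkj using Nat.decreasingInduction with
    | self => exact le_rfl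
    | of_succ k hk ih => exact ((pow_div_le_pow_succ_div_iff hN hs k).2 (hmono hk.le)).trans ih
  · induction k, hjk using Nat.le_induction with
    | base => exact le_rfl
    | succ k hk ih => exact ((pow_succ_div_le_pow_div_iff hN hs k).2 (hmono hk)).trans ih

theorem LogConvexSeq.omegaM_succ_div (hlc : LogConvexSeq N) (hN : ∀ j, 0 < N j) (j : ℕ) :
    omegaM N (N (j + 1) / N j) = Real.log ((N (j + 1) / N j) ^ j / N j) := by
  have hs : 0 < N (j + 1) / N j := div_pos (hN _) (hN _)
  rw [omegaM, if_neg hs.ne']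
  refine IsGreatest.csSup_eq ⟨mem_range_self j, forall_mem_range.2 fun k => ?_⟩
  exact Real.log_le_log (div_pos (pow_pos hs k) (hN k)) (hlc.pow_succ_div_div_le hN j k)

theorem LogConvexSeq.vMc_succ_div_div (hlc : LogConvexSeq N) (hN : ∀ j, 0 < N j) {d : ℝ}
    (hd : d ≠ 0) (j : ℕ) :
    vMc N d (N (j + 1) / N j / d) = N j / (N (j + 1) / N j) ^ j := by
  have hs : 0 < N (j + 1) / N j := div_pos (hN _) (hN _)
  rw [vMc, mul_div_cancel₀ _ hd, hlc.omegaM_succ_div hN, ← Real.log_inv, inv_div,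
    Real.exp_log (div_pos (hN j) (pow_pos hs j))]

theorem LogConvexSeq.div_mul_pow_le_of_mul_vMc_le (hlc : LogConvexSeq N) (hN : ∀ j, 0 < N j)
    {M : ℕ → ℝ} {a d C : ℝ} (hd : 0 < d) {j : ℕ}
    (h : ∀ t, 0 < t → (a * t) ^ j / M j * vMc N d t ≤ C) :
    N j / M j * (a / d) ^ j ≤ C := by
  set s := N (j + 1) / N j
  have hs : 0 < s := div_pos (hN _) (hN _)
  calc N j / M j * (a / d) ^ j = (a * (s / d)) ^ j / M j * (N j / s ^ j) := by
        simp only [mul_pow, div_pow]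
        field_simp
    _ = (a * (s / d)) ^ j / M j * vMc N d (s / d) := by rw [hlc.vMc_succ_div_div hN hd.ne']
    _ ≤ C := h _ (div_pos hs hd)

end LogConvex

section WeightSeries

variable {M : ℕ → ℝ}

theorem WeightSeq.eventually_pow_le (hM : WeightSeq M) {t : ℝ} (ht : 0 ≤ t) :
    ∀ᶠ j in atTop, t ^ j ≤ M j := by
  filter_upwards [hM.2.2.eventually_ge_atTop t, eventually_ge_atTop 1] with j htj hj
  calc t ^ j ≤ (M j ^ (1 / (j : ℝ))) ^ j := by gcongr
    _ = M j := by rw [one_div, Real.rpow_inv_natCast_pow (hM.1 j).le (by lia)]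

theorem WeightSeq.bddAbove_range_log (hM : WeightSeq M) {t : ℝ} (ht : 0 ≤ t) :
    BddAbove (range fun j : ℕ => Real.log (t ^ j / M j)) := by
  have hlog : ∀ᶠ j in atTop, Real.log (t ^ j / M j) ≤ 0 := by
    filter_upwards [hM.eventually_pow_le ht] with j hj
    exact Real.log_nonpos (div_nonneg (pow_nonneg ht j) (hM.1 j).le) ((div_le_one (hM.1 j)).2 hj)
  exact (isBoundedUnder_of_eventually_le hlog).bddAbove_range

theorem WeightSeq.pow_div_le_exp_omegaM (hM : WeightSeq M) {t : ℝ} (ht : 0 ≤ t) (j : ℕ) :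
    t ^ j / M j ≤ Real.exp (omegaM M t) := by
  rcases ht.eq_or_lt with rfl | ht_pos
  · rcases j with _ | j <;> simp [omegaM, hM.2.1]
  · rw [← Real.log_le_iff_le_exp (div_pos (pow_pos ht_pos j) (hM.1 j)), omegaM, if_neg ht_pos.ne']
    exact le_ciSup (hM.bddAbove_range_log ht) j

theorem WeightSeq.pow_div_le_exp_omegaM_two_mul (hM : WeightSeq M) {t : ℝ} (ht : 0 ≤ t) (j : ℕ) :
    t ^ j / M j ≤ Real.exp (omegaM M (2 * t)) * (1 / 2) ^ j := by
  calc t ^ j / M j = (2 * t) ^ j / M j * (1 / 2) ^ j := by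
        rw [div_mul_eq_mul_div, ← mul_pow]
        ring_nf
    _ ≤ Real.exp (omegaM M (2 * t)) * (1 / 2) ^ j := by
        gcongr
        exact hM.pow_div_le_exp_omegaM (by positivity) j

theorem WeightSeq.summable_pow_div (hM : WeightSeq M) {t : ℝ} (ht : 0 ≤ t) :
    Summable fun j : ℕ => t ^ j / M j :=
  .of_nonneg_of_le (fun j => div_nonneg (pow_nonneg ht j) (hM.1 j).le)
    (hM.pow_div_le_exp_omegaM_two_mul ht) (summable_geometric_two.mul_left _)

/-- The power series `∑ z ^ j / M_j`, the test function whose growth is compared with weights;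
it takes the junk value `0` where the series does not converge. -/
noncomputable def weightSeries (M : ℕ → ℝ) (z : ℂ) : ℂ :=
  ∑' j : ℕ, z ^ j / (M j : ℂ)

theorem norm_pow_div_ofReal (hM : ∀ j, 0 < M j) (z : ℂ) (j : ℕ) :
    ‖z ^ j / (M j : ℂ)‖ = ‖z‖ ^ j / M j := by
  rw [norm_div, norm_pow, Complex.norm_of_nonneg (hM j).le]

theorem WeightSeq.differentiable_weightSeries (hM : WeightSeq M) :
    Differentiable ℂ (weightSeries M) := by
  intro z
  have hball : DifferentiableOn ℂ (weightSeries M) (Metric.ball 0 (‖z‖ + 1)) := by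
    refine Complex.differentiableOn_tsum_of_summable_norm
      (hM.summable_pow_div (t := ‖z‖ + 1) (by positivity)) (fun j => by fun_prop)
      Metric.isOpen_ball fun j w hw => ?_
    have hMj := hM.1 j
    have hwz : ‖w‖ ≤ ‖z‖ + 1 := (mem_ball_zero_iff.1 hw).le
    rw [norm_pow_div_ofReal hM.1]
    gcongr
  exact hball.differentiableAt (Metric.isOpen_ball.mem_nhds (by simp))

theorem WeightSeq.norm_weightSeries_le (hM : WeightSeq M) (z : ℂ) :
    ‖weightSeries M z‖ ≤ Real.exp (omegaM M (2 * ‖z‖)) * 2 := by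
  refine tsum_of_norm_bounded (hasSum_geometric_two.mul_left _) fun j => ?_
  rw [norm_pow_div_ofReal hM.1]
  exact hM.pow_div_le_exp_omegaM_two_mul (norm_nonneg z) j

theorem WeightSeq.pow_div_le_norm_weightSeries (hM : WeightSeq M) {t : ℝ} (ht : 0 ≤ t) (j : ℕ) :
    t ^ j / M j ≤ ‖weightSeries M t‖ := by
  have hnonneg (k : ℕ) : 0 ≤ t ^ k / M k := div_nonneg (pow_nonneg ht k) (hM.1 k).le
  have hreal : weightSeries M t = ((∑' k, t ^ k / M k : ℝ) : ℂ) := by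
    push_cast
    rfl
  rw [hreal, Complex.norm_of_nonneg (tsum_nonneg hnonneg)]
  exact (hM.summable_pow_div ht).le_tsum j fun k _ => hnonneg k

theorem WeightSeq.weightSeries_mem_Hinf (hM : WeightSeq M) {c : ℝ} (hc : 0 ≤ c) :
    (fun z : ℂ => weightSeries M ((c / 2 : ℝ) * z)) ∈ Hinf (vMc M c) := by
  refine ⟨hM.differentiable_weightSeries.comp (differentiable_id.const_mul _), 2, fun z => ?_⟩
  have hnorm : 2 * ‖((c / 2 : ℝ) * z : ℂ)‖ = c * ‖z‖ := by
    rw [norm_mul, Complex.norm_of_nonneg (by positivity)]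
    ring
  rw [vMc, Real.exp_neg, ← div_eq_mul_inv, div_le_iff₀' (Real.exp_pos _), ← hnorm]
  exact hM.norm_weightSeries_le _

theorem WeightSeq.exists_pow_div_mul_le_of_Hinf_subset (hM : WeightSeq M) {c : ℝ} (hc : 0 ≤ c)
    {v : ℝ → ℝ} (hv : ∀ t, 0 ≤ t → 0 ≤ v t) (hsub : Hinf (vMc M c) ⊆ Hinf v) :
    ∃ C, ∀ t, 0 ≤ t → ∀ j : ℕ, (c / 2 * t) ^ j / M j * v t ≤ C := by
  obtain ⟨-, C, hC⟩ := hsub (hM.weightSeries_mem_Hinf hc)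
  refine ⟨C, fun t ht j => ?_⟩
  calc (c / 2 * t) ^ j / M j * v t ≤ ‖weightSeries M (c / 2 * t : ℝ)‖ * v t :=
        mul_le_mul_of_nonneg_right (hM.pow_div_le_norm_weightSeries (by positivity) j) (hv t ht)
    _ ≤ C := by simpa [Complex.norm_of_nonneg ht, abs_of_nonneg ht] using hC t

end WeightSeries

theorem rpow_one_div_le_of_mul_pow_le {x r C : ℝ} (hx : 0 ≤ x) (hr : 0 < r) {j : ℕ} (hj : j ≠ 0)
    (h : x * r ^ j ≤ C) : x ^ (1 / (j : ℝ)) ≤ max C 1 / r := by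
  have hC : C ≤ max C 1 ^ j := (le_max_left C 1).trans (le_self_pow₀ (le_max_right C 1) hj)
  rw [one_div, Real.rpow_inv_le_iff_of_pos hx (by positivity) (by positivity), Real.rpow_natCast,
    div_pow, le_div_iff₀ (pow_pos hr j)]
  exact h.trans hC

/-- Proposition: for weight sequences `M`, `N` with `N` log-convex, if
`H^∞_{v_{M,c}}(ℂ) ⊆ H^∞_{v_{N,d}}(ℂ)` for some `c, d > 0`, then `N ≼ M`. -/
theorem stmt8 (M N : ℕ → ℝ) (hM : WeightSeq M) (hN : WeightSeq N)
    (hNlc : LogConvexSeq N)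
    (h : ∃ c : ℝ, 0 < c ∧ ∃ d : ℝ, 0 < d ∧ Hinf (vMc M c) ⊆ Hinf (vMc N d)) :
    ∃ S : ℝ, ∀ j : ℕ, 1 ≤ j → (N j / M j) ^ (1 / (j : ℝ)) ≤ S := by
  obtain ⟨c, hc, d, hd, hsub⟩ := h
  obtain ⟨C, hC⟩ :=
    hM.exists_pow_div_mul_le_of_Hinf_subset hc.le (fun _ _ => (Real.exp_pos _).le) hsub
  refine ⟨max C 1 / (c / 2 / d), fun j hj => ?_⟩
  have hratio : N j / M j * (c / 2 / d) ^ j ≤ C :=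
    hNlc.div_mul_pow_le_of_mul_vMc_le hN.1 hd fun t ht => hC t ht.le j
  exact rpow_one_div_le_of_mul_pow_le (div_pos (hN.1 j) (hM.1 j)).le (by positivity)
    (Nat.one_le_iff_ne_zero.1 hj) hratio
end

section
/- Let M, N ∈ LC. Then the following are equivalent: (i) there exist c ∈ ℕ, c ≥ 1, and A ≥ 1 such that N_j ≤ A·(M_{c·j})^{1/c} for all j ∈ ℕ; (ii) there exist c ≥ 1 and C ≥ 1 with v_N(t)^c ≤ C·v_M(t) for all t ≥ 0 (equivalently, ω_M(t) = O(ω_N(t)) as t → ∞); (iii) ⋃_{n∈ℕ, n≥1} H^∞_{v_M^n}(ℂ) ⊆ ⋃_{n∈ℕ, n≥1} H^∞_{v_N^n}(ℂ); (iv) ⋂_{c>0} H^∞_{v_M^c}(ℂ) ⊆ ⋂_{c>0} H^∞_{v_N^c}(ℂ). -/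
open Filter Set

/-!
Every condition is equivalent to a bound `ω_M ≤ c·ω_N + K`. For (i), log-convexity makes the
supremum defining `ω_N(t)` attained at the index `j` for `t = N_j / N_{j-1}`, so that `N` can be
read off from `ω_N`. For (iii) and (iv), if no such bound holds, then for each `p` some monomial
`a z^i`, the `p`-th root of a term `z^j / M_j` up to rounding, is at most `exp(ω_M / p)` everywhere
but far larger than `exp(p·ω_N)` at some point `t ≥ 0`. A sum of such monomials with geometric
weights lies in every `H^∞_{v_M^c}` and in no `H^∞_{v_N^n}`, which refutes both inclusions at once.
Rounding the exponent `j / p` to an integer is harmless: it costs a power `t^r` with `r < p`, and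
powers are absorbed by `exp(ω_N)`.
-/

lemma le_mul_rpow_one_div_iff {x A y : ℝ} {c : ℕ} (hx : 0 ≤ x) (hA : 0 ≤ A) (hy : 0 ≤ y)
    (hc : c ≠ 0) : x ≤ A * y ^ (1 / (c : ℝ)) ↔ x ^ c ≤ A ^ c * y := by
  rw [← pow_le_pow_iff_left₀ hx (by positivity) hc, mul_pow, one_div,
    Real.rpow_inv_natCast_pow hy hc]

section AssociatedFunction

variable {M N : ℕ → ℝ}

namespace WeightSeq

lemma eventually_pow_le_s11 (hM : WeightSeq M) {t : ℝ} (ht : 0 ≤ t) :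
    ∀ᶠ j : ℕ in atTop, t ^ j ≤ M j := by
  filter_upwards [hM.2.2.eventually_ge_atTop t, eventually_ne_atTop 0] with j hj hj0
  calc t ^ j ≤ (M j ^ (1 / (j : ℝ))) ^ j := pow_le_pow_left₀ ht hj j
    _ = M j := by rw [one_div, Real.rpow_inv_natCast_pow (hM.1 j).le hj0]

lemma bddAbove_range_log_s11 (hM : WeightSeq M) {t : ℝ} (ht : 0 < t) :
    BddAbove (range fun j : ℕ => Real.log (t ^ j / M j)) := by
  refine IsBoundedUnder.bddAbove_range ⟨0, eventually_map.2 ?_⟩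
  filter_upwards [hM.eventually_pow_le_s11 ht.le] with j hj
  have hMj := hM.1 j
  exact Real.log_nonpos (by positivity) ((div_le_one hMj).2 hj)

lemma omegaM_le_iff (hM : WeightSeq M) {t B : ℝ} (ht : 0 ≤ t) :
    omegaM M t ≤ B ↔ ∀ j, t ^ j ≤ M j * Real.exp B := by
  rcases ht.eq_or_lt with rfl | ht
  · rw [omegaM, if_pos rfl]
    constructor
    · rintro hB (_ | j)
      · simpa [hM.2.1] using hB
      · have hMj := hM.1 (j + 1)
        rw [zero_pow j.succ_ne_zero]
        positivity
    · intro h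
      simpa [hM.2.1] using h 0
  · rw [omegaM, if_neg ht.ne', ciSup_le_iff (hM.bddAbove_range_log_s11 ht)]
    refine forall_congr' fun j => ?_
    have hMj := hM.1 j
    rw [Real.log_le_iff_le_exp (by positivity), div_le_iff₀' hMj]

lemma pow_le_mul_exp_omegaM (hM : WeightSeq M) {t : ℝ} (ht : 0 ≤ t) (j : ℕ) :
    t ^ j ≤ M j * Real.exp (omegaM M t) :=
  (hM.omegaM_le_iff ht).1 le_rfl j

lemma omegaM_nonneg (hM : WeightSeq M) {t : ℝ} (ht : 0 ≤ t) : 0 ≤ omegaM M t := by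
  simpa [hM.2.1] using hM.pow_le_mul_exp_omegaM ht 0

lemma exists_pow_le_mul_exp (hM : WeightSeq M) {c : ℝ} (hc : 0 < c) (n : ℕ) :
    ∃ D, 0 < D ∧ ∀ i ≤ n, ∀ t, 0 ≤ t → t ^ i ≤ D * Real.exp (c * omegaM M t) := by
  obtain ⟨q, hq⟩ := exists_nat_one_div_lt hc
  set m := n * (q + 1)
  have hMm := hM.1 m
  have top_pow_le : ∀ t, 0 ≤ t → t ^ n ≤ (1 + M m) * Real.exp (c * omegaM M t) := by
    intro t ht
    have hω : omegaM M t ≤ ((q + 1 : ℕ) : ℝ) * (c * omegaM M t) := by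
      rw [div_lt_iff₀ (by positivity)] at hq
      push_cast
      nlinarith [hM.omegaM_nonneg ht]
    refine le_of_pow_le_pow_left₀ q.succ_ne_zero (by positivity) ?_
    calc (t ^ n) ^ (q + 1) = t ^ m := (pow_mul t n (q + 1)).symm
      _ ≤ M m * Real.exp (omegaM M t) := hM.pow_le_mul_exp_omegaM ht m
      _ ≤ (1 + M m) ^ (q + 1) * Real.exp (((q + 1 : ℕ) : ℝ) * (c * omegaM M t)) := by
        gcongr
        calc M m ≤ 1 + M m := by linarith
          _ ≤ (1 + M m) ^ (q + 1) := le_self_pow₀ (by linarith) q.succ_ne_zero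
      _ = ((1 + M m) * Real.exp (c * omegaM M t)) ^ (q + 1) := by rw [mul_pow, Real.exp_nat_mul]
  refine ⟨1 + M m, by positivity, fun i hi t ht => ?_⟩
  rcases le_total t 1 with ht1 | ht1
  · have hω : 0 ≤ c * omegaM M t := mul_nonneg hc.le (hM.omegaM_nonneg ht)
    calc t ^ i ≤ 1 := pow_le_one₀ ht ht1
      _ ≤ (1 + M m) * Real.exp (c * omegaM M t) :=
        one_le_mul_of_one_le_of_one_le (by linarith) (Real.one_le_exp hω)
  · exact (pow_le_pow_right₀ ht1 hi).trans (top_pow_le t ht)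

lemma pow_div_le_rpow_mul_exp (hM : WeightSeq M) (hMmono : Monotone M) {p : ℕ} (hp : p ≠ 0)
    {s : ℝ} (hs : 0 ≤ s) (j : ℕ) :
    s ^ (j / p) ≤ M j ^ (1 / (p : ℝ)) * Real.exp (omegaM M s / p) := by
  have hMj := hM.1 j
  refine le_of_pow_le_pow_left₀ hp (by positivity) ?_
  calc (s ^ (j / p)) ^ p = s ^ (j / p * p) := (pow_mul _ _ _).symm
    _ ≤ M (j / p * p) * Real.exp (omegaM M s) := hM.pow_le_mul_exp_omegaM hs _
    _ ≤ M j * Real.exp (omegaM M s) := by gcongr; exact hMmono (Nat.div_mul_le_self j p)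
    _ = (M j ^ (1 / (p : ℝ)) * Real.exp (omegaM M s / p)) ^ p := by
      rw [mul_pow, one_div, Real.rpow_inv_natCast_pow hMj.le hp, ← Real.exp_nat_mul,
        mul_div_cancel₀ _ (Nat.cast_ne_zero.2 hp)]

end WeightSeq

namespace LogConvexSeq

lemma monotone_ratio (hN : LogConvexSeq N) (hpos : ∀ j, 0 < N j) :
    Monotone fun j => N (j + 1) / N j := by
  refine monotone_nat_of_le_succ fun j => ?_
  rw [div_le_div_iff₀ (hpos _) (hpos _), ← sq, mul_comm]
  exact hN (j + 1) j.succ_pos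

lemma ratio_pow_div_le (hN : LogConvexSeq N) (hpos : ∀ j, 0 < N j) (j m : ℕ) :
    (N (j + 1) / N j) ^ m / N m ≤ (N (j + 1) / N j) ^ (j + 1) / N (j + 1) := by
  set t := N (j + 1) / N j
  have ht : 0 < t := div_pos (hpos _) (hpos _)
  have le_succ_iff : ∀ k, t ^ k / N k ≤ t ^ (k + 1) / N (k + 1) ↔ N (k + 1) / N k ≤ t := by
    intro k
    rw [div_le_div_iff₀ (hpos _) (hpos _), div_le_iff₀ (hpos _), pow_succ, mul_assoc,
      mul_le_mul_iff_right₀ (pow_pos ht k)]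
  have succ_le_iff : ∀ k, t ^ (k + 1) / N (k + 1) ≤ t ^ k / N k ↔ t ≤ N (k + 1) / N k := by
    intro k
    rw [div_le_div_iff₀ (hpos _) (hpos _), le_div_iff₀ (hpos _), pow_succ, mul_assoc,
      mul_le_mul_iff_right₀ (pow_pos ht k)]
  rcases le_total m (j + 1) with hm | hm
  · induction hm using Nat.decreasingInduction with
    | self => exact le_rfl
    | of_succ k hk ih =>
      exact ((le_succ_iff k).2 (hN.monotone_ratio hpos (Nat.le_of_lt_succ hk))).trans ih
  · induction m, hm using Nat.le_induction with
    | base => exact le_rfl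
    | succ k hk ih =>
      exact ((succ_le_iff k).2 (hN.monotone_ratio hpos (Nat.le_of_succ_le hk))).trans ih

end LogConvexSeq

lemma LCset.monotone (hM : LCset M) : Monotone M := by
  obtain ⟨⟨hpos, hM0, -⟩, hlc, hM1⟩ := hM
  refine monotone_nat_of_le_succ fun j => ?_
  rw [← one_le_div (hpos j)]
  calc 1 ≤ M (0 + 1) / M 0 := by simpa [hM0] using hM1
    _ ≤ M (j + 1) / M j := hlc.monotone_ratio hpos j.zero_le

lemma WeightSeq.exists_mul_exp_omegaM_le_pow (hN : WeightSeq N) (hlc : LogConvexSeq N) (j : ℕ) :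
    ∃ t, 0 ≤ t ∧ N j * Real.exp (omegaM N t) ≤ t ^ j := by
  rcases j with _ | j
  · exact ⟨0, le_rfl, by simp [hN.2.1, omegaM]⟩
  have hpos := hN.1
  set t := N (j + 1) / N j
  have ht : 0 < t := div_pos (hpos _) (hpos _)
  have hq : 0 < t ^ (j + 1) / N (j + 1) := div_pos (pow_pos ht _) (hpos _)
  refine ⟨t, ht.le, ?_⟩
  rw [← le_div_iff₀' (hpos _), ← Real.le_log_iff_exp_le hq, hN.omegaM_le_iff ht.le]
  intro m
  rw [Real.exp_log hq, ← div_le_iff₀' (hpos m)]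
  exact hlc.ratio_pow_div_le hpos j m

end AssociatedFunction

section Domination

variable {M N : ℕ → ℝ}

/-- The growth relation `ω_M = O(ω_N)`, written as an affine bound on `[0, ∞)` with an integer
factor; all conditions of the theorem are compared with it. -/
def OmegaDominated (M N : ℕ → ℝ) : Prop :=
  ∃ c : ℕ, 1 ≤ c ∧ ∃ K : ℝ, ∀ t : ℝ, 0 ≤ t → omegaM M t ≤ c * omegaM N t + K

lemma omegaDominated_of_le_rpow (hM : WeightSeq M) (hMmono : Monotone M) (hN : WeightSeq N)
    {c : ℕ} (hc : c ≠ 0) {A : ℝ} (hA : 0 < A)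
    (h : ∀ j : ℕ, N j ≤ A * (M (c * j)) ^ (1 / (c : ℝ))) : OmegaDominated M N := by
  obtain ⟨D, hD, hpow⟩ := hN.exists_pow_le_mul_exp one_pos c
  refine ⟨c + 1, c.succ_pos, Real.log (A ^ c * D), fun t ht => (hM.omegaM_le_iff ht).2 fun k => ?_⟩
  set E := Real.exp (omegaM N t)
  have hexp : Real.exp ((c + 1 : ℕ) * omegaM N t + Real.log (A ^ c * D))
      = E ^ (c + 1) * (A ^ c * D) := by
    rw [Real.exp_add, Real.exp_nat_mul, Real.exp_log (by positivity)]
  have hquot : t ^ (k / c) ≤ N (k / c) * E := hN.pow_le_mul_exp_omegaM ht _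
  have hrem : t ^ (k % c) ≤ D * E := by
    simpa only [one_mul] using hpow _ (Nat.mod_lt k (Nat.pos_of_ne_zero hc)).le t ht
  have hNM : N (k / c) ^ c ≤ A ^ c * M k :=
    calc N (k / c) ^ c ≤ A ^ c * M (c * (k / c)) :=
          (le_mul_rpow_one_div_iff (hN.1 _).le hA.le (hM.1 _).le hc).1 (h _)
      _ ≤ A ^ c * M k := by gcongr; exact hMmono (Nat.mul_div_le k c)
  calc t ^ k = (t ^ (k / c)) ^ c * t ^ (k % c) := by
        rw [← pow_mul, ← pow_add, Nat.div_add_mod']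
    _ ≤ (N (k / c) * E) ^ c * (D * E) := by
        have hNk := hN.1 (k / c)
        gcongr
    _ = N (k / c) ^ c * (E ^ (c + 1) * D) := by ring
    _ ≤ A ^ c * M k * (E ^ (c + 1) * D) := by gcongr
    _ = M k * Real.exp ((c + 1 : ℕ) * omegaM N t + Real.log (A ^ c * D)) := by rw [hexp]; ring

lemma OmegaDominated.exists_le_rpow (hM : WeightSeq M) (hN : WeightSeq N) (hNlc : LogConvexSeq N)
    (h : OmegaDominated M N) :
    ∃ c : ℕ, 1 ≤ c ∧ ∃ A : ℝ, 1 ≤ A ∧ ∀ j : ℕ, N j ≤ A * (M (c * j)) ^ (1 / (c : ℝ)) := by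
  obtain ⟨c, hc, K, hK⟩ := h
  have hK0 : 0 ≤ K := by simpa [omegaM] using hK 0 le_rfl
  have hc0 : c ≠ 0 := Nat.one_le_iff_ne_zero.1 hc
  refine ⟨c, hc, Real.exp K, Real.one_le_exp hK0, fun j => ?_⟩
  rw [le_mul_rpow_one_div_iff (hN.1 j).le (Real.exp_pos K).le (hM.1 _).le hc0]
  obtain ⟨t, ht, hNt⟩ := hN.exists_mul_exp_omegaM_le_pow hNlc j
  set E := Real.exp (omegaM N t)
  have hMj := hM.1 (c * j)
  have hNj := hN.1 j
  have hωexp : Real.exp (omegaM M t) ≤ E ^ c * Real.exp K := by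
    rw [← Real.exp_nat_mul, ← Real.exp_add]
    exact Real.exp_le_exp.2 (hK t ht)
  refine le_of_mul_le_mul_right ?_ (pow_pos (Real.exp_pos (omegaM N t)) c)
  calc N j ^ c * E ^ c = (N j * E) ^ c := (mul_pow _ _ _).symm
    _ ≤ (t ^ j) ^ c := by gcongr
    _ = t ^ (c * j) := by rw [← pow_mul, mul_comm]
    _ ≤ M (c * j) * Real.exp (omegaM M t) := hM.pow_le_mul_exp_omegaM ht _
    _ ≤ M (c * j) * (E ^ c * Real.exp K) := by gcongr
    _ ≤ M (c * j) * (E ^ c * Real.exp K ^ c) := by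
      gcongr
      exact le_self_pow₀ (Real.one_le_exp hK0) hc0
    _ = Real.exp K ^ c * M (c * j) * E ^ c := by ring

lemma exists_le_rpow_iff_omegaDominated (hM : WeightSeq M) (hMmono : Monotone M)
    (hN : WeightSeq N) (hNlc : LogConvexSeq N) :
    (∃ c : ℕ, 1 ≤ c ∧ ∃ A : ℝ, 1 ≤ A ∧ ∀ j : ℕ, N j ≤ A * (M (c * j)) ^ (1 / (c : ℝ))) ↔
      OmegaDominated M N :=
  ⟨fun ⟨_, hc, _, hA, h⟩ => omegaDominated_of_le_rpow hM hMmono hN (Nat.one_le_iff_ne_zero.1 hc)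
    (one_pos.trans_le hA) h, OmegaDominated.exists_le_rpow hM hN hNlc⟩

lemma vM_rpow_le_exp_mul_vM_iff {c K t : ℝ} :
    vM N t ^ c ≤ Real.exp K * vM M t ↔ omegaM M t ≤ c * omegaM N t + K := by
  rw [vM, vM, ← Real.exp_mul, ← Real.exp_add, Real.exp_le_exp]
  constructor <;> intro h <;> linarith

lemma exists_vM_rpow_le_iff_omegaDominated (hN : WeightSeq N) :
    (∃ c : ℝ, 1 ≤ c ∧ ∃ C : ℝ, 1 ≤ C ∧ ∀ t : ℝ, 0 ≤ t → (vM N t) ^ c ≤ C * vM M t) ↔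
      OmegaDominated M N := by
  constructor
  · rintro ⟨c, hc, C, hC, h⟩
    obtain ⟨n, hn⟩ := exists_nat_ge c
    refine ⟨n, by exact_mod_cast hc.trans hn, Real.log C, fun t ht => ?_⟩
    have hC0 : 0 < C := one_pos.trans_le hC
    have hω := hN.omegaM_nonneg ht
    calc omegaM M t ≤ c * omegaM N t + Real.log C :=
          vM_rpow_le_exp_mul_vM_iff.1 (by simpa only [Real.exp_log hC0] using h t ht)
      _ ≤ n * omegaM N t + Real.log C := by gcongr
  · rintro ⟨c, hc, K, h⟩
    have hK0 : 0 ≤ K := by simpa [omegaM] using h 0 le_rfl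
    exact ⟨c, by exact_mod_cast hc, Real.exp K, Real.one_le_exp hK0,
      fun t ht => vM_rpow_le_exp_mul_vM_iff.2 (h t ht)⟩

end Domination

section MonomialSeries

/-- The function `z ↦ ∑ a_k z^{i_k}` with real coefficients, used to build entire functions from a
sequence of monomials; the exponents `i_k` may repeat and need not be ordered. -/
noncomputable def monomialSeries (a : ℕ → ℝ) (i : ℕ → ℕ) (z : ℂ) : ℂ :=
  ∑' k, (a k : ℂ) * z ^ i k

variable {a : ℕ → ℝ} {i : ℕ → ℕ}

lemma differentiable_monomialSeries (h : ∀ r, 0 ≤ r → Summable fun k => |a k| * r ^ i k) :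
    Differentiable ℂ (monomialSeries a i) := by
  intro z
  have hball : DifferentiableOn ℂ (monomialSeries a i) (Metric.ball 0 (‖z‖ + 1)) := by
    refine Complex.differentiableOn_tsum_of_summable_norm (h (‖z‖ + 1) (by positivity))
      (fun k => by fun_prop) Metric.isOpen_ball fun k w hw => ?_
    rw [norm_mul, norm_pow, Complex.norm_real, Real.norm_eq_abs]
    gcongr
    exact (mem_ball_zero_iff.1 hw).le
  exact hball.differentiableAt (Metric.isOpen_ball.mem_nhds (by simp))

lemma mul_pow_le_norm_monomialSeries (ha : ∀ k, 0 ≤ a k) {t : ℝ} (ht : 0 ≤ t)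
    (h : Summable fun k => a k * t ^ i k) (k : ℕ) :
    a k * t ^ i k ≤ ‖monomialSeries a i t‖ := by
  have hnonneg : ∀ m, 0 ≤ a m * t ^ i m := fun m => mul_nonneg (ha m) (pow_nonneg ht _)
  have hreal : monomialSeries a i t = ((∑' m, a m * t ^ i m : ℝ) : ℂ) := by
    simp only [monomialSeries, Complex.ofReal_tsum, Complex.ofReal_mul, Complex.ofReal_pow]
  rw [hreal, Complex.norm_of_nonneg (tsum_nonneg hnonneg)]
  exact h.le_tsum k fun m _ => hnonneg m

variable {v : ℝ → ℝ} {ε : ℕ → ℝ}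

lemma summable_mul_pow_of_mul_weight_le (hv : ∀ s, 0 ≤ s → 0 < v s) (hε : Summable ε)
    (h : ∀ k s, 0 ≤ s → |a k| * s ^ i k * v s ≤ ε k) {r : ℝ} (hr : 0 ≤ r) :
    Summable fun k => |a k| * r ^ i k :=
  Summable.of_nonneg_of_le (fun k => by positivity)
    (fun k => (le_div_iff₀ (hv r hr)).2 (h k r hr)) (hε.div_const (v r))

lemma monomialSeries_mem_Hinf (hv : ∀ s, 0 ≤ s → 0 < v s) (hε : Summable ε)
    (h : ∀ k s, 0 ≤ s → |a k| * s ^ i k * v s ≤ ε k) : monomialSeries a i ∈ Hinf v := by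
  refine ⟨differentiable_monomialSeries fun r => summable_mul_pow_of_mul_weight_le hv hε h,
    ∑' k, ε k, fun z => ?_⟩
  have hz := norm_nonneg z
  rw [← le_div_iff₀ (hv _ hz), ← tsum_div_const]
  refine tsum_of_norm_bounded (hε.div_const _).hasSum fun k => ?_
  rw [norm_mul, norm_pow, Complex.norm_real, Real.norm_eq_abs, le_div_iff₀ (hv _ hz)]
  exact h k _ hz

end MonomialSeries

section WeightedSpaces

variable {M N : ℕ → ℝ}

lemma vMpow_pos (c t : ℝ) : 0 < vMpow M c t := Real.exp_pos _

lemma mul_vMpow_le_iff {c t x C : ℝ} :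
    x * vMpow M c t ≤ C ↔ x ≤ C * Real.exp (c * omegaM M t) := by
  rw [vMpow, Real.exp_neg, ← div_eq_mul_inv, div_le_iff₀ (Real.exp_pos _)]

lemma Hinf_subset_of_le_mul {v w : ℝ → ℝ} {C : ℝ} (hC : 0 ≤ C)
    (h : ∀ t, 0 ≤ t → w t ≤ C * v t) : Hinf v ⊆ Hinf w := by
  rintro f ⟨hf, B, hB⟩
  refine ⟨hf, C * B, fun z => ?_⟩
  calc ‖f z‖ * w ‖z‖ ≤ ‖f z‖ * (C * v ‖z‖) := by gcongr; exact h _ (norm_nonneg z)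
    _ = C * (‖f z‖ * v ‖z‖) := by ring
    _ ≤ C * B := by gcongr; exact hB z

lemma OmegaDominated.exists_Hinf_subset (h : OmegaDominated M N) :
    ∃ c : ℕ, 1 ≤ c ∧ ∀ a : ℝ, 0 ≤ a → Hinf (vMpow M a) ⊆ Hinf (vMpow N (a * c)) := by
  obtain ⟨c, hc, K, hK⟩ := h
  refine ⟨c, hc, fun a ha => Hinf_subset_of_le_mul (Real.exp_pos (a * K)).le fun t ht => ?_⟩
  rw [vMpow, vMpow, ← Real.exp_add, Real.exp_le_exp]
  linarith [mul_le_mul_of_nonneg_left (hK t ht) ha]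

lemma exists_peaked_monomial (hM : WeightSeq M) (hMmono : Monotone M) (hN : WeightSeq N)
    (h : ¬ OmegaDominated M N) {p : ℕ} (hp : p ≠ 0) {B : ℝ} (hB : 0 < B) :
    ∃ (a : ℝ) (i : ℕ) (t : ℝ), 0 ≤ a ∧ 0 ≤ t ∧
      (∀ s, 0 ≤ s → a * s ^ i ≤ Real.exp (omegaM M s / p)) ∧
      B * Real.exp (p * omegaM N t) ≤ a * t ^ i := by
  obtain ⟨D, hD, hpow⟩ := hN.exists_pow_le_mul_exp one_pos p
  obtain ⟨t, ht, hlt⟩ : ∃ t, 0 ≤ t ∧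
      ((p ^ 2 + 1 : ℕ) : ℝ) * omegaM N t + Real.log (B ^ p * D) < omegaM M t := by
    by_contra! hle
    exact h ⟨p ^ 2 + 1, Nat.succ_pos _, _, hle⟩
  obtain ⟨j, hj⟩ := not_forall.1 (mt (hM.omegaM_le_iff ht).2 hlt.not_ge)
  rw [not_le, Real.exp_add, Real.exp_nat_mul, Real.exp_log (by positivity)] at hj
  set E := Real.exp (omegaM N t)
  have hE : 0 < E := Real.exp_pos _
  set root := M j ^ (1 / (p : ℝ)) with hroot_def
  have hroot : 0 < root := Real.rpow_pos_of_pos (hM.1 j) _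
  have hroot_pow : root ^ p = M j := by
    rw [hroot_def, one_div, Real.rpow_inv_natCast_pow (hM.1 j).le hp]
  refine ⟨root⁻¹, j / p, t, (inv_pos.2 hroot).le, ht, fun s hs => ?_, ?_⟩
  · rw [inv_mul_le_iff₀ hroot]
    exact hM.pow_div_le_rpow_mul_exp hMmono hp hs j
  · have hrem : t ^ (j % p) ≤ D * E := by
      simpa only [one_mul] using hpow _ (Nat.mod_lt j (Nat.pos_of_ne_zero hp)).le t ht
    rw [le_inv_mul_iff₀ hroot, Real.exp_nat_mul]
    refine le_of_pow_le_pow_left₀ hp (by positivity) (le_of_mul_le_mul_right ?_ (mul_pos hD hE))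
    calc (root * (B * E ^ p)) ^ p * (D * E) = M j * (E ^ (p ^ 2 + 1) * (B ^ p * D)) := by
          rw [← hroot_pow]; ring
      _ ≤ t ^ j := hj.le
      _ = (t ^ (j / p)) ^ p * t ^ (j % p) := by rw [← pow_mul, ← pow_add, Nat.div_add_mod']
      _ ≤ (t ^ (j / p)) ^ p * (D * E) := by gcongr

lemma exists_forall_mul_pow_le (hM : WeightSeq M) {a : ℕ → ℝ} {i : ℕ → ℕ} (ha : ∀ k, 0 ≤ a k)
    {c : ℝ} (hc : 0 < c)
    (h : ∀ᶠ k in atTop, ∀ s, 0 ≤ s → a k * s ^ i k ≤ Real.exp (c * omegaM M s)) :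
    ∃ C, ∀ k s, 0 ≤ s → a k * s ^ i k ≤ C * Real.exp (c * omegaM M s) := by
  obtain ⟨k₀, hk₀⟩ := eventually_atTop.1 h
  choose D _ hpow using fun k => hM.exists_pow_le_mul_exp hc (i k)
  obtain ⟨B, hB⟩ := ((Set.finite_lt_nat k₀).image fun k => a k * D k).bddAbove
  refine ⟨max B 1, fun k s hs => ?_⟩
  rcases lt_or_ge k k₀ with hk | hk
  · have hkB : a k * D k ≤ B := hB (mem_image_of_mem _ hk)
    calc a k * s ^ i k ≤ a k * (D k * Real.exp (c * omegaM M s)) :=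
          mul_le_mul_of_nonneg_left (hpow k _ le_rfl s hs) (ha k)
      _ = a k * D k * Real.exp (c * omegaM M s) := (mul_assoc _ _ _).symm
      _ ≤ max B 1 * Real.exp (c * omegaM M s) := by gcongr; exact hkB.trans (le_max_left _ _)
  · exact (hk₀ k hk s hs).trans (le_mul_of_one_le_left (Real.exp_pos _).le (le_max_right _ _))

lemma monomialSeries_mem_Hinf_vMpow (hM : WeightSeq M) {a : ℕ → ℝ} {i : ℕ → ℕ}
    (ha : ∀ k, 0 ≤ a k)
    (h : ∀ k s, 0 ≤ s → a k * s ^ i k ≤ Real.exp (omegaM M s / (k + 1 : ℕ))) {c : ℝ}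
    (hc : 0 < c) : monomialSeries (fun k => (1 / 2) ^ k * a k) i ∈ Hinf (vMpow M c) := by
  obtain ⟨C, hC⟩ := exists_forall_mul_pow_le hM (i := i) ha hc <| by
    filter_upwards [(tendsto_one_div_add_atTop_nhds_zero_nat (𝕜 := ℝ)).eventually_le_const hc]
      with k hk s hs
    refine (h k s hs).trans (Real.exp_le_exp.2 ?_)
    rw [div_eq_mul_one_div, mul_comm, Nat.cast_succ]
    exact mul_le_mul_of_nonneg_right hk (hM.omegaM_nonneg hs)
  refine monomialSeries_mem_Hinf (fun s _ => vMpow_pos c s) (summable_geometric_two.mul_right C)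
    fun k s hs => ?_
  rw [abs_of_nonneg (mul_nonneg (by positivity) (ha k)), mul_assoc, mul_assoc, ← mul_assoc (a k)]
  gcongr
  exact mul_vMpow_le_iff.2 (hC k s hs)

lemma monomialSeries_notMem_Hinf_vMpow (hN : WeightSeq N) {a : ℕ → ℝ} {i : ℕ → ℕ} {t : ℕ → ℝ}
    (ha : ∀ k, 0 ≤ a k) (ht : ∀ k, 0 ≤ t k)
    (hsum : ∀ k, Summable fun m => a m * t k ^ i m)
    (h : ∀ k, 2 ^ k * Real.exp (k * omegaM N (t k)) ≤ a k * t k ^ i k) (n : ℕ) :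
    monomialSeries a i ∉ Hinf (vMpow N n) := by
  rintro ⟨-, C, hC⟩
  have two_pow_le : ∀ k, n ≤ k → (2 : ℝ) ^ k ≤ C := by
    intro k hk
    have hω := hN.omegaM_nonneg (ht k)
    have hCk := mul_vMpow_le_iff.1 (hC (t k))
    rw [Complex.norm_of_nonneg (ht k)] at hCk
    refine le_of_mul_le_mul_right ?_ (Real.exp_pos (n * omegaM N (t k)))
    calc 2 ^ k * Real.exp (n * omegaM N (t k)) ≤ 2 ^ k * Real.exp (k * omegaM N (t k)) := by gcongr
      _ ≤ a k * t k ^ i k := h k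
      _ ≤ ‖monomialSeries a i (t k)‖ := mul_pow_le_norm_monomialSeries ha (ht k) (hsum k) k
      _ ≤ C * Real.exp (n * omegaM N (t k)) := hCk
  have hunbdd : Tendsto (fun k : ℕ => (2 : ℝ) ^ k) atTop atTop :=
    tendsto_pow_atTop_atTop_of_one_lt one_lt_two
  obtain ⟨k, hCk, hnk⟩ := ((hunbdd.eventually_gt_atTop C).and (eventually_ge_atTop n)).exists
  exact (two_pow_le k hnk).not_gt hCk

lemma exists_mem_Hinf_vMpow_forall_notMem_Hinf_vMpow (hM : WeightSeq M) (hMmono : Monotone M)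
    (hN : WeightSeq N) (h : ¬ OmegaDominated M N) :
    ∃ f : ℂ → ℂ, (∀ c : ℝ, 0 < c → f ∈ Hinf (vMpow M c)) ∧
      ∀ n : ℕ, f ∉ Hinf (vMpow N n) := by
  choose a i t ha ht hle hge using fun k : ℕ =>
    exists_peaked_monomial hM hMmono hN h k.succ_ne_zero (B := 4 ^ k) (by positivity)
  refine ⟨_, fun c hc => monomialSeries_mem_Hinf_vMpow hM ha hle hc,
    monomialSeries_notMem_Hinf_vMpow hN (fun k => mul_nonneg (by positivity) (ha k)) ht
      (fun k => ?_) fun k => ?_⟩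
  · refine Summable.of_nonneg_of_le (fun m => ?_) (fun m => ?_)
      (summable_geometric_two.mul_right (Real.exp (omegaM M (t k))))
    · exact mul_nonneg (mul_nonneg (by positivity) (ha m)) (pow_nonneg (ht k) _)
    · rw [mul_assoc]
      gcongr
      refine (hle m _ (ht k)).trans (Real.exp_le_exp.2 ?_)
      exact div_le_self (hM.omegaM_nonneg (ht k)) (by exact_mod_cast m.succ_pos)
  · have hω := hN.omegaM_nonneg (ht k)
    calc 2 ^ k * Real.exp (k * omegaM N (t k))
        ≤ 2 ^ k * Real.exp ((k + 1 : ℕ) * omegaM N (t k)) := by gcongr; exact k.le_succ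
      _ = (1 / 2) ^ k * (4 ^ k * Real.exp ((k + 1 : ℕ) * omegaM N (t k))) := by
        rw [← mul_assoc, ← mul_pow]; norm_num
      _ ≤ (1 / 2) ^ k * (a k * t k ^ i k) := mul_le_mul_of_nonneg_left (hge k) (by positivity)
      _ = (1 / 2) ^ k * a k * t k ^ i k := (mul_assoc _ _ _).symm

lemma iUnion_Hinf_subset_iff_omegaDominated (hM : WeightSeq M) (hMmono : Monotone M)
    (hN : WeightSeq N) :
    (⋃ n : {n : ℕ // 1 ≤ n}, Hinf (vMpow M (n.1 : ℝ))) ⊆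
        ⋃ n : {n : ℕ // 1 ≤ n}, Hinf (vMpow N (n.1 : ℝ)) ↔ OmegaDominated M N := by
  constructor
  · intro hsub
    by_contra hdom
    obtain ⟨f, hfM, hfN⟩ := exists_mem_Hinf_vMpow_forall_notMem_Hinf_vMpow hM hMmono hN hdom
    obtain ⟨n, hn⟩ := mem_iUnion.1 (hsub (mem_iUnion.2 ⟨⟨1, le_rfl⟩, hfM _ (by simp)⟩))
    exact hfN n hn
  · intro hdom
    obtain ⟨c, hc, hsub⟩ := hdom.exists_Hinf_subset
    refine iUnion_subset fun n => subset_iUnion_of_subset ⟨n * c, Nat.mul_pos n.2 hc⟩ ?_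
    simpa only [Nat.cast_mul] using hsub n n.1.cast_nonneg

lemma iInter_Hinf_subset_iff_omegaDominated (hM : WeightSeq M) (hMmono : Monotone M)
    (hN : WeightSeq N) :
    (⋂ c : {c : ℝ // 0 < c}, Hinf (vMpow M c.1)) ⊆
        ⋂ c : {c : ℝ // 0 < c}, Hinf (vMpow N c.1) ↔ OmegaDominated M N := by
  constructor
  · intro hsub
    by_contra hdom
    obtain ⟨f, hfM, hfN⟩ := exists_mem_Hinf_vMpow_forall_notMem_Hinf_vMpow hM hMmono hN hdom
    have hf1 := mem_iInter.1 (hsub (mem_iInter.2 fun c => hfM c c.2)) ⟨1, one_pos⟩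
    exact hfN 1 (by simpa only [Nat.cast_one] using hf1)
  · intro hdom
    obtain ⟨c, hc, hsub⟩ := hdom.exists_Hinf_subset
    have hc0 : (0 : ℝ) < c := by exact_mod_cast hc
    refine subset_iInter fun b => iInter_subset_of_subset ⟨b / c, div_pos b.2 hc0⟩ ?_
    simpa only [div_mul_cancel₀ _ hc0.ne'] using hsub (b / c) (div_pos b.2 hc0).le

end WeightedSpaces

theorem stmt11_general (M N : ℕ → ℝ) (hM : WeightSeq M) (hMmono : Monotone M)
    (hN : WeightSeq N) (hNlc : LogConvexSeq N) :
    ((∃ c : ℕ, 1 ≤ c ∧ ∃ A : ℝ, 1 ≤ A ∧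
        ∀ j : ℕ, N j ≤ A * (M (c * j)) ^ (1 / (c : ℝ))) ↔
      (∃ c : ℝ, 1 ≤ c ∧ ∃ C : ℝ, 1 ≤ C ∧
        ∀ t : ℝ, 0 ≤ t → (vM N t) ^ c ≤ C * vM M t)) ∧
    ((∃ c : ℕ, 1 ≤ c ∧ ∃ A : ℝ, 1 ≤ A ∧
        ∀ j : ℕ, N j ≤ A * (M (c * j)) ^ (1 / (c : ℝ))) ↔
      (⋃ n : {n : ℕ // 1 ≤ n}, Hinf (vMpow M (n.1 : ℝ))) ⊆
        ⋃ n : {n : ℕ // 1 ≤ n}, Hinf (vMpow N (n.1 : ℝ))) ∧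
    ((∃ c : ℕ, 1 ≤ c ∧ ∃ A : ℝ, 1 ≤ A ∧
        ∀ j : ℕ, N j ≤ A * (M (c * j)) ^ (1 / (c : ℝ))) ↔
      (⋂ c : {c : ℝ // 0 < c}, Hinf (vMpow M c.1)) ⊆
        ⋂ c : {c : ℝ // 0 < c}, Hinf (vMpow N c.1)) := by
  have hseq := exists_le_rpow_iff_omegaDominated hM hMmono hN hNlc
  exact ⟨hseq.trans (exists_vM_rpow_le_iff_omegaDominated hN).symm,
    hseq.trans (iUnion_Hinf_subset_iff_omegaDominated hM hMmono hN).symm,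
    hseq.trans (iInter_Hinf_subset_iff_omegaDominated hM hMmono hN).symm⟩

/-- Theorem: for `M, N ∈ LC`, the conditions `N_j ≤ A·(M_{cj})^{1/c}`,
`v_M ≼^𝔠 v_N`, inclusion of the exponential-type unions and inclusion of the
exponential-type intersections are all equivalent. -/
theorem stmt11 (M N : ℕ → ℝ) (hM : LCset M) (hN : LCset N) :
    ((∃ c : ℕ, 1 ≤ c ∧ ∃ A : ℝ, 1 ≤ A ∧
        ∀ j : ℕ, N j ≤ A * (M (c * j)) ^ (1 / (c : ℝ))) ↔
      (∃ c : ℝ, 1 ≤ c ∧ ∃ C : ℝ, 1 ≤ C ∧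
        ∀ t : ℝ, 0 ≤ t → (vM N t) ^ c ≤ C * vM M t)) ∧
    ((∃ c : ℕ, 1 ≤ c ∧ ∃ A : ℝ, 1 ≤ A ∧
        ∀ j : ℕ, N j ≤ A * (M (c * j)) ^ (1 / (c : ℝ))) ↔
      (⋃ n : {n : ℕ // 1 ≤ n}, Hinf (vMpow M (n.1 : ℝ))) ⊆
        ⋃ n : {n : ℕ // 1 ≤ n}, Hinf (vMpow N (n.1 : ℝ))) ∧
    ((∃ c : ℕ, 1 ≤ c ∧ ∃ A : ℝ, 1 ≤ A ∧
        ∀ j : ℕ, N j ≤ A * (M (c * j)) ^ (1 / (c : ℝ))) ↔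
      (⋂ c : {c : ℝ // 0 < c}, Hinf (vMpow M c.1)) ⊆
        ⋂ c : {c : ℝ // 0 < c}, Hinf (vMpow N c.1)) :=
  stmt11_general M N hM.1 hM.monotone hN.1 hN.2.1
end
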